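/- For every Cayley tree T labelled with [n]_0, T is an increasing tree (f_T(i) < i for all i ∈ {1,…,n}) if and only if its preference sequence π_T is a subexceedant parking function (π_T(i) ≤ i for all i ∈ {1,…,n}). Consequently, the map T ↦ π_T restricts to a bijection between the set of increasing trees labelled with [n]_0 and the set of subexceedant functions of length n. -/

import Mathlib

/-!
If `f i < i` for `1 ≤ i ≤ k`, the priority-first search visits `0, 1, …, k` in this order: once
`0, …, i - 1` are visited, `i` is available and is the smallest unvisited label. So on an
increasing tree the weary permutation is the identity and `π_T = f_T + 1`, a subexceedant sequence.

Conversely, let `π_T` be subexceedant and suppose `f` decreases on `1, …, i - 1`. The search begins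
`0, …, i - 1`, and `π_T i ≤ i` says that `f i` is among these first `i` vertices, so `f i < i`. Here
one needs that the search reaches every vertex of the tree: the path from an unvisited vertex to
the root must enter the visited set somewhere, so the search never gets stuck.

On increasing trees `T ↦ π_T` is therefore `f ↦ f + 1`, with inverse `π ↦ π - 1`; a subexceedant
sequence is a parking function because car `c` finds the spots `1, …, c - 1` taken and parks in `c`.
-/

open scoped Classical

namespace WearyParking

/-- `f` is the parent function of a Cayley tree on `{0,…,n}` rooted at `0`:
`f 0 = 0`, `f` is pinned to `0` outside `{1,…,n}`, `f` maps `{1,…,n}` into `{0,…,n}`,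
and every vertex reaches the root under iteration. -/
def IsCayleyTree (n : ℕ) (f : ℕ → ℕ) : Prop :=
  f 0 = 0 ∧ (∀ i, n < i → f i = 0) ∧
  (∀ i, 1 ≤ i → i ≤ n → f i ≤ n) ∧
  (∀ i, 1 ≤ i → i ≤ n → ∃ k, f^[k] i = 0)

/-- A non-root vertex `i` is a record of the tree if it is greater than
all of its ancestors. -/
def IsRecord (n : ℕ) (f : ℕ → ℕ) (i : ℕ) : Prop :=
  1 ≤ i ∧ i ≤ n ∧ ∀ k, 1 ≤ k → f^[k] i < i

/-- The smallest record larger than `i`. -/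
noncomputable def nextRecord (n : ℕ) (f : ℕ → ℕ) (i : ℕ) : ℕ :=
  sInf {j | IsRecord n f j ∧ i < j}

/-- The record (blob) code of the tree, a function on `{1,…,n-1}`:
at a non-record position it records the parent, and at a record position it
records the parent of the next record. -/
noncomputable def blob (n : ℕ) (f : ℕ → ℕ) (i : ℕ) : ℕ :=
  if IsRecord n f i then f (nextRecord n f i) else f i

/-- Number of children of vertex `v` in the tree. -/
def numChildren (n : ℕ) (f : ℕ → ℕ) (v : ℕ) : ℕ :=
  ((Finset.Icc 1 n).filter fun i => f i = v).card

/-- The list of the first `i+1` vertices visited by the priority-first search: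
start at the root `0`; at each step visit the smallest unvisited vertex whose
parent has been visited. -/
noncomputable def wearyList (n : ℕ) (f : ℕ → ℕ) : ℕ → List ℕ
  | 0 => [0]
  | (i + 1) =>
      wearyList n f i ++
        [sInf {v | 1 ≤ v ∧ v ≤ n ∧ v ∉ wearyList n f i ∧ f v ∈ wearyList n f i}]

/-- The weary permutation of the tree: `weary n f i` is the `i`-th vertex visited
by the priority-first search (with `weary n f 0 = 0`). -/
noncomputable def weary (n : ℕ) (f : ℕ → ℕ) (i : ℕ) : ℕ :=
  (wearyList n f n).getD i 0

/-- The inverse of the weary permutation. -/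
noncomputable def wearyInv (n : ℕ) (f : ℕ → ℕ) (v : ℕ) : ℕ :=
  sInf {i | weary n f i = v}

/-- The preference sequence `π_T` of the tree: `π_T i = ω_T⁻¹ (f_T i) + 1`. -/
noncomputable def pref (n : ℕ) (f : ℕ → ℕ) (i : ℕ) : ℕ :=
  wearyInv n f (f i) + 1

/-- Parent function of the priority tree `pt(T)`: `ω_T⁻¹ ∘ f_T ∘ ω_T`. -/
noncomputable def prioParent (n : ℕ) (f : ℕ → ℕ) (i : ℕ) : ℕ :=
  wearyInv n f (f (weary n f i))

/-- The list of spots occupied by cars `1,…,c` in the classical parking process: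
car `c` parks at the first spot `≥ π c` not occupied by an earlier car. -/
noncomputable def spotList (π : ℕ → ℕ) : ℕ → List ℕ
  | 0 => []
  | (c + 1) => spotList π c ++ [sInf {s | π (c + 1) ≤ s ∧ s ∉ spotList π c}]

/-- The spot where car `c` ends up in the classical parking process. -/
noncomputable def spot (π : ℕ → ℕ) (c : ℕ) : ℕ :=
  (spotList π c).getD (c - 1) 0

/-- `π` is a parking function of length `n`: preferences lie in `{1,…,n}`
(pinned to `1` outside `{1,…,n}`) and every car parks within the `n` spots. -/
def IsParkingFun (n : ℕ) (π : ℕ → ℕ) : Prop :=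
  (∀ c, 1 ≤ c → c ≤ n → 1 ≤ π c ∧ π c ≤ n) ∧
  (∀ c, c = 0 ∨ n < c → π c = 1) ∧
  (∀ c, 1 ≤ c → c ≤ n → spot π c ≤ n)

/-- The bird's-eye permutation `ω_π`: the car parked at spot `i` (and `0` at `0`). -/
noncomputable def birdsEye (n : ℕ) (π : ℕ → ℕ) (i : ℕ) : ℕ :=
  if i = 0 then 0 else sInf {c | 1 ≤ c ∧ c ≤ n ∧ spot π c = i}

/-- The inverse of the bird's-eye permutation. -/
noncomputable def birdsEyeInv (n : ℕ) (π : ℕ → ℕ) (c : ℕ) : ℕ :=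
  sInf {i | birdsEye n π i = c}

/-- Parent function of the parking tree `PT(π)`: `f_π i = ω_π (π i - 1)`. -/
noncomputable def ptParent (n : ℕ) (π : ℕ → ℕ) (i : ℕ) : ℕ :=
  if 1 ≤ i ∧ i ≤ n then birdsEye n π (π i - 1) else 0

/-- `v` is a record of the parking function `π`, i.e. a left-to-right maximum of
the word `ω_π(1) ω_π(2) ⋯ ω_π(n)`. -/
def IsPfRecord (n : ℕ) (π : ℕ → ℕ) (v : ℕ) : Prop :=
  ∃ i, 1 ≤ i ∧ i ≤ n ∧ birdsEye n π i = v ∧ ∀ j, 1 ≤ j → j < i → birdsEye n π j < v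

/-- The waiting time of the tree: `wait T = Σ_{i=1}^n (i - f_{pt(T)}(i))`. -/
noncomputable def wait (n : ℕ) (f : ℕ → ℕ) : ℕ :=
  ∑ i ∈ Finset.Icc 1 n, (i - prioParent n f i)

/-- The number of priority small ascents of the tree. -/
noncomputable def psa (n : ℕ) (f : ℕ → ℕ) : ℕ :=
  ((Finset.Icc 1 n).filter fun i => prioParent n f i = i - 1).card

/-- The number of children of the root. -/
def degRoot (n : ℕ) (f : ℕ → ℕ) : ℕ := numChildren n f 0

/-- The children sequence: `chseq n f j` is the number of vertices with exactly
`j` children. -/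
def chseq (n : ℕ) (f : ℕ → ℕ) (j : ℕ) : ℕ :=
  ((Finset.Icc 0 n).filter fun v => numChildren n f v = j).card

/-- The number of probes of the parking function: `n` plus the total displacement. -/
noncomputable def probes (n : ℕ) (π : ℕ → ℕ) : ℕ :=
  n + ∑ c ∈ Finset.Icc 1 n, (spot π c - π c)

/-- The number of lucky cars of `π`: cars parking at their preferred spot. -/
noncomputable def lucky (n : ℕ) (π : ℕ → ℕ) : ℕ :=
  ((Finset.Icc 1 n).filter fun c => spot π c = π c).card

/-- The number of `1`s in `π`. -/
def ones (n : ℕ) (π : ℕ → ℕ) : ℕ :=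
  ((Finset.Icc 1 n).filter fun c => π c = 1).card

/-- The multiplicity of the value `v` in the parking function `π`. -/
def multIn (n : ℕ) (π : ℕ → ℕ) (v : ℕ) : ℕ :=
  ((Finset.Icc 1 n).filter fun c => π c = v).card

/-- The multiplicity sequence: `multSeq n π j` is the number of values in
`{1,…,n+1}` appearing exactly `j` times in `π`. -/
def multSeq (n : ℕ) (π : ℕ → ℕ) (j : ℕ) : ℕ :=
  ((Finset.Icc 1 (n + 1)).filter fun v => multIn n π v = j).card

/-- The tree is a path graph with endpoints `0` and `n`: every vertex has at most
one child and `n` is the (unique) leaf. -/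
def IsPathTree (n : ℕ) (f : ℕ → ℕ) : Prop :=
  (∀ v, v ≤ n → numChildren n f v ≤ 1) ∧ numChildren n f n = 0

/-- `g` is the parent map of a rooted forest on `{1,…,n}` rooted at `{1,…,k}`:
the vertices `1,…,k` are roots (fixed points), every other vertex of `{1,…,n}` has a
parent in `{1,…,n}`, every vertex reaches one of the roots under iteration, and `g`
is pinned to `0` outside `{1,…,n}`. -/
def IsForestRootedAt (n k : ℕ) (g : ℕ → ℕ) : Prop :=
  (∀ i, 1 ≤ i → i ≤ k → g i = i) ∧
  (∀ i, k < i → i ≤ n → 1 ≤ g i ∧ g i ≤ n) ∧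
  (∀ i, 1 ≤ i → i ≤ n → ∃ m, 1 ≤ g^[m] i ∧ g^[m] i ≤ k) ∧
  (∀ i, i = 0 ∨ n < i → g i = 0)

lemma exists_iterate_eq_bot {α : Type*} [Preorder α] [OrderBot α] [WellFoundedLT α] {f : α → α}
    {b : α} (h : ∀ x ≤ b, x ≠ ⊥ → f x < x) {x : α} (hx : x ≤ b) : ∃ k, f^[k] x = ⊥ := by
  induction x using WellFoundedLT.induction with
  | _ x ih =>
    by_cases hbot : x = ⊥
    · exact ⟨0, hbot⟩
    · have hlt := h x hx hbot
      obtain ⟨k, hk⟩ := ih (f x) hlt (hlt.le.trans hx)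
      exact ⟨k + 1, hk⟩

/-- The tree with parent function `f` is increasing up to the vertex `n`: every vertex of
`{1,…,n}` is larger than its parent. Only the values of `f` on `{1,…,n}` matter, so that the notion
also applies to an initial segment of the vertices of a larger tree. -/
def IsIncreasing (n : ℕ) (f : ℕ → ℕ) : Prop :=
  ∀ i, 1 ≤ i → i ≤ n → f i < i

/-- The sequence `π 1, …, π n` is subexceedant: its `i`-th entry is at most `i`. Values outside
`{1,…,n}` are unconstrained, and entries may be `0`, which is not a spot. -/
def IsSubexceedant (n : ℕ) (π : ℕ → ℕ) : Prop :=
  ∀ i, 1 ≤ i → i ≤ n → π i ≤ i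

/-- The vertices available to the priority-first search once those in `L` have been visited: the
unvisited non-root vertices whose parent has been visited. -/
def searchFrontier (n : ℕ) (f : ℕ → ℕ) (L : List ℕ) : Set ℕ :=
  {v | 1 ≤ v ∧ v ≤ n ∧ v ∉ L ∧ f v ∈ L}

section

variable {n k c i v : ℕ} {f π : ℕ → ℕ}

lemma IsCayleyTree.apply_le (hf : IsCayleyTree n f) (i : ℕ) : f i ≤ n := by
  obtain ⟨hzero, hout, hle, -⟩ := hf
  rcases Nat.eq_zero_or_pos i with rfl | hi
  · exact hzero.trans_le n.zero_le
  · rcases le_or_gt i n with hin | hin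
    · exact hle i hi hin
    · exact (hout i hin).trans_le n.zero_le

lemma IsIncreasing.mono (h : IsIncreasing n f) (hk : k ≤ n) : IsIncreasing k f :=
  fun i hi hik => h i hi (hik.trans hk)

lemma IsIncreasing.isCayleyTree (h : IsIncreasing n f) (hzero : f 0 = 0)
    (hout : ∀ i, n < i → f i = 0) : IsCayleyTree n f :=
  ⟨hzero, hout, fun i hi hin => (h i hi hin).le.trans hin,
    fun _ _ hin => exists_iterate_eq_bot
      (fun j hj hj0 => h j (Nat.one_le_iff_ne_zero.mpr hj0) hj) hin⟩

lemma wearyList_succ (n : ℕ) (f : ℕ → ℕ) (k : ℕ) :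
    wearyList n f (k + 1) = wearyList n f k ++ [sInf (searchFrontier n f (wearyList n f k))] :=
  rfl

lemma length_wearyList (n : ℕ) (f : ℕ → ℕ) (k : ℕ) : (wearyList n f k).length = k + 1 := by
  induction k with
  | zero => rfl
  | succ k ih => rw [wearyList_succ, List.length_append, ih, List.length_singleton]

lemma wearyList_prefix (n : ℕ) (f : ℕ → ℕ) {k m : ℕ} (h : k ≤ m) :
    wearyList n f k <+: wearyList n f m := by
  induction m, h using Nat.le_induction with
  | base => exact List.prefix_rfl
  | succ m _ ih => exact ih.trans (List.prefix_append _ _)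

lemma zero_mem_wearyList (n : ℕ) (f : ℕ → ℕ) (k : ℕ) : 0 ∈ wearyList n f k :=
  (wearyList_prefix n f k.zero_le).subset (List.mem_singleton_self 0)

lemma le_of_mem_wearyList (hv : v ∈ wearyList n f k) : v ≤ n := by
  induction k with
  | zero => exact (List.mem_singleton.mp hv).trans_le n.zero_le
  | succ k ih =>
    rcases List.mem_append.mp hv with hold | hnew
    · exact ih hold
    · rw [List.mem_singleton.mp hnew]
      rcases (searchFrontier n f (wearyList n f k)).eq_empty_or_nonempty with hempty | hne
      · exact (Nat.sInf_eq_zero.mpr (Or.inr hempty)).trans_le n.zero_le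
      · exact (Nat.sInf_mem hne).2.1

lemma searchFrontier_nonempty (hf : IsCayleyTree n f) {L : List ℕ} (hzero : 0 ∈ L) (hv : v ≤ n)
    (hvL : v ∉ L) : (searchFrontier n f L).Nonempty := by
  have pos_of_notMem : ∀ w, w ∉ L → 1 ≤ w := fun w hw =>
    Nat.one_le_iff_ne_zero.mpr fun h => hw (h ▸ hzero)
  obtain ⟨m, hm⟩ := hf.2.2.2 v (pos_of_notMem v hvL) hv
  obtain ⟨k, hkL, hkL'⟩ : ∃ k, f^[k] v ∉ L ∧ f^[k + 1] v ∈ L :=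
    Nat.exists_not_and_succ_of_not_zero_of_exists (p := fun k => f^[k] v ∈ L) hvL
      ⟨m, hm ▸ hzero⟩
  have hle : f^[k] v ≤ n := by
    cases k with
    | zero => exact hv
    | succ k => exact f.iterate_succ_apply' k v ▸ hf.apply_le _
  exact ⟨f^[k] v, pos_of_notMem _ hkL, hle, hkL, f.iterate_succ_apply' k v ▸ hkL'⟩

lemma sInf_searchFrontier_mem (hf : IsCayleyTree n f) (hk : k < n) :
    sInf (searchFrontier n f (wearyList n f k)) ∈ searchFrontier n f (wearyList n f k) := by
  obtain ⟨v, hv, hvL⟩ : ∃ v ∈ List.range (n + 1), v ∉ wearyList n f k := by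
    by_contra! hall
    have hlength := (List.nodup_range.subperm hall).length_le
    rw [List.length_range, length_wearyList] at hlength
    omega
  exact Nat.sInf_mem <| searchFrontier_nonempty hf (zero_mem_wearyList n f k)
    (Nat.lt_succ_iff.mp (List.mem_range.mp hv)) hvL

lemma nodup_wearyList (hf : IsCayleyTree n f) (hk : k ≤ n) : (wearyList n f k).Nodup := by
  induction k with
  | zero => exact List.nodup_singleton 0
  | succ k ih =>
    exact (ih (by omega)).append (List.nodup_singleton _)
      (List.disjoint_singleton.mpr (sInf_searchFrontier_mem hf hk).2.2.1)

lemma wearyList_perm_range (hf : IsCayleyTree n f) :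
    (wearyList n f n).Perm (List.range (n + 1)) := by
  have hsubset : wearyList n f n ⊆ List.range (n + 1) := fun _ hv =>
    List.mem_range.mpr (Nat.lt_succ_of_le (le_of_mem_wearyList hv))
  refine ((nodup_wearyList hf le_rfl).subperm hsubset).perm_of_length_le ?_
  rw [List.length_range, length_wearyList]

lemma weary_wearyInv (hf : IsCayleyTree n f) (hv : v ≤ n) : weary n f (wearyInv n f v) = v := by
  have hmem : v ∈ wearyList n f n :=
    (wearyList_perm_range hf).mem_iff.mpr (List.mem_range.mpr (Nat.lt_succ_of_le hv))
  obtain ⟨i, hi, hiv⟩ := List.getElem_of_mem hmem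
  exact Nat.sInf_mem (s := {i | weary n f i = v}) ⟨i, (List.getD_eq_getElem _ _ hi).trans hiv⟩

lemma wearyList_eq_range (hk : k ≤ n) (h : IsIncreasing k f) :
    wearyList n f k = List.range (k + 1) := by
  induction k with
  | zero => rfl
  | succ k ih =>
    have hleast : IsLeast (searchFrontier n f (List.range (k + 1))) (k + 1) := by
      refine ⟨⟨by omega, hk, by simp, List.mem_range.mpr (h (k + 1) (by omega) le_rfl)⟩, ?_⟩
      rintro v ⟨-, -, hv, -⟩
      simpa only [List.mem_range, not_lt] using hv
    rw [wearyList_succ, ih (by omega) (h.mono k.le_succ), hleast.csInf_eq,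
      List.range_succ (n := k + 1)]

lemma weary_eq_self (hk : k ≤ n) (h : IsIncreasing k f) (hi : i ≤ k) : weary n f i = i := by
  obtain ⟨rest, hrest⟩ := wearyList_prefix n f hk
  have hlt : i < (List.range (k + 1)).length := by rw [List.length_range]; omega
  rw [weary, ← hrest, wearyList_eq_range hk h, List.getD_append _ _ _ _ hlt,
    List.getD_eq_getElem _ _ hlt, List.getElem_range]

lemma wearyInv_eq_self (h : IsIncreasing n f) (hv : v ≤ n) : wearyInv n f v = v := by
  have hleast : IsLeast {i | weary n f i = v} v := by
    refine ⟨weary_eq_self le_rfl h hv, fun i (hi : weary n f i = v) => ?_⟩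
    by_contra! hiv
    rw [weary_eq_self le_rfl h (hiv.le.trans hv)] at hi
    exact hiv.ne hi
  exact hleast.csInf_eq

lemma pref_eq_add_one (hf : IsCayleyTree n f) (h : IsIncreasing n f) : pref n f = f + 1 :=
  funext fun i => congrArg (· + 1) (wearyInv_eq_self h (hf.apply_le i))

lemma isSubexceedant_add_one_iff : IsSubexceedant n (f + 1) ↔ IsIncreasing n f :=
  Iff.rfl

lemma isIncreasing_of_isSubexceedant_pref (hf : IsCayleyTree n f)
    (h : IsSubexceedant n (pref n f)) : IsIncreasing n f := by
  intro i hi hin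
  induction i using Nat.strong_induction_on with
  | _ i ih =>
    have hinc : IsIncreasing (i - 1) f := fun j hj hji => ih j (by omega) hj (by omega)
    have hlt : wearyInv n f (f i) < i := h i hi hin
    calc f i = weary n f (wearyInv n f (f i)) := (weary_wearyInv hf (hf.apply_le i)).symm
      _ = wearyInv n f (f i) := weary_eq_self (by omega) hinc (by omega)
      _ < i := hlt

lemma isIncreasing_iff_isSubexceedant_pref (hf : IsCayleyTree n f) :
    IsIncreasing n f ↔ IsSubexceedant n (pref n f) :=
  ⟨fun h => pref_eq_add_one hf h ▸ isSubexceedant_add_one_iff.mpr h,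
    isIncreasing_of_isSubexceedant_pref hf⟩

lemma IsParkingFun.one_le (hπ : IsParkingFun n π) : 1 ≤ π := by
  intro c
  by_cases hc : c = 0 ∨ n < c
  · exact (hπ.2.1 c hc).ge
  · exact (hπ.1 c (by omega) (by omega)).1

lemma IsSubexceedant.mono (h : IsSubexceedant n π) (hk : k ≤ n) : IsSubexceedant k π :=
  fun i hi hik => h i hi (hik.trans hk)

lemma spotList_eq_range' (hpos : ∀ i, 1 ≤ i → i ≤ c → 1 ≤ π i) (h : IsSubexceedant c π) :
    spotList π c = List.range' 1 c := by
  induction c with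
  | zero => rfl
  | succ c ih =>
    have hleast : IsLeast {s | π (c + 1) ≤ s ∧ s ∉ List.range' 1 c} (c + 1) := by
      refine ⟨⟨h (c + 1) (by omega) le_rfl, by simp [add_comm]⟩, ?_⟩
      rintro s ⟨hs, hfree⟩
      have hone := hpos (c + 1) (by omega) le_rfl
      simp only [List.mem_range'_1] at hfree
      omega
    rw [spotList, ih (fun i hi hic => hpos i hi (by omega)) (h.mono c.le_succ),
      hleast.csInf_eq, List.range'_concat, one_mul, add_comm 1 c]

lemma spot_eq_self (hpos : ∀ i, 1 ≤ i → i ≤ c → 1 ≤ π i) (h : IsSubexceedant c π) (hc : 1 ≤ c) :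
    spot π c = c := by
  have hlt : c - 1 < (List.range' 1 c).length := by rw [List.length_range']; omega
  rw [spot, spotList_eq_range' hpos h, List.getD_eq_getElem _ _ hlt, List.getElem_range']
  omega

lemma IsSubexceedant.isParkingFun (h : IsSubexceedant n π)
    (hpos : ∀ c, 1 ≤ c → c ≤ n → 1 ≤ π c) (hout : ∀ c, c = 0 ∨ n < c → π c = 1) :
    IsParkingFun n π := by
  refine ⟨fun c hc hcn => ⟨hpos c hc hcn, (h c hc hcn).trans hcn⟩, hout, fun c hc hcn => ?_⟩
  rw [spot_eq_self (fun i hi hic => hpos i hi (hic.trans hcn)) (h.mono hcn) hc]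
  exact hcn

lemma IsIncreasing.isParkingFun_add_one (h : IsIncreasing n f) (hf : IsCayleyTree n f) :
    IsParkingFun n (f + 1) := by
  refine (isSubexceedant_add_one_iff.mpr h).isParkingFun (fun c _ _ => Nat.le_add_left 1 (f c)) ?_
  rintro c (rfl | hc)
  · exact congrArg (· + 1) hf.1
  · exact congrArg (· + 1) (hf.2.1 c hc)

lemma IsSubexceedant.isIncreasing_sub_one (h : IsSubexceedant n π) (hpos : 1 ≤ π) :
    IsIncreasing n (π - 1) :=
  isSubexceedant_add_one_iff.mp <| (tsub_add_cancel_of_le hpos).symm ▸ h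

lemma IsSubexceedant.isCayleyTree_sub_one (h : IsSubexceedant n π) (hπ : IsParkingFun n π) :
    IsCayleyTree n (π - 1) :=
  (h.isIncreasing_sub_one hπ.one_le).isCayleyTree
    (congrArg (· - 1) (hπ.2.1 0 (Or.inl rfl)))
    fun i hi => congrArg (· - 1) (hπ.2.1 i (Or.inr hi))

lemma bijOn_add_one (n : ℕ) :
    Set.BijOn (· + 1) {f | IsCayleyTree n f ∧ IsIncreasing n f}
      {π | IsParkingFun n π ∧ IsSubexceedant n π} := by
  refine Set.InvOn.bijOn (f' := (· - 1)) ⟨?_, ?_⟩ ?_ ?_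
  · exact fun f _ => add_tsub_cancel_right f 1
  · exact fun π hπ => tsub_add_cancel_of_le hπ.1.one_le
  · exact fun f ⟨hf, h⟩ => ⟨h.isParkingFun_add_one hf, isSubexceedant_add_one_iff.mpr h⟩
  · exact fun π ⟨hπ, h⟩ => ⟨h.isCayleyTree_sub_one hπ, h.isIncreasing_sub_one hπ.one_le⟩

end

/-- A Cayley tree is increasing iff its preference sequence is
subexceedant; hence `T ↦ π_T` restricts to a bijection between increasing trees
labelled with `[n]₀` and subexceedant functions of length `n`. -/
theorem stmt18 (n : ℕ) :
    (∀ f : ℕ → ℕ, IsCayleyTree n f →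
      ((∀ i, 1 ≤ i → i ≤ n → f i < i) ↔ (∀ i, 1 ≤ i → i ≤ n → pref n f i ≤ i))) ∧
    Set.BijOn (fun f => pref n f)
      {f : ℕ → ℕ | IsCayleyTree n f ∧ ∀ i, 1 ≤ i → i ≤ n → f i < i}
      {π : ℕ → ℕ | IsParkingFun n π ∧ ∀ i, 1 ≤ i → i ≤ n → π i ≤ i} :=
  ⟨fun _ hf => isIncreasing_iff_isSubexceedant_pref hf,
    (bijOn_add_one n).congr fun _ ⟨hf, h⟩ => (pref_eq_add_one hf h).symm⟩

end WearyParking
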